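/- Let c_0 = C_0^{2n/(n−2s)} ∫_{ℝ^n} (1+|y|²)^{−(n+2s)/2} dy and, for points P^i, P^h ∈ ℝ^n and Λ_i, Λ_h ∈ [C_1, C_2], let ε_{ih} = ( Λ_i/Λ_h + Λ_h/Λ_i + Λ_i Λ_h |P^i − P^h|² )^{−(n−2s)/2}. There exist constants C > 0 and δ_0 > 0, depending only on n, s, C_1, C_2, such that whenever ε_{ih} ≤ δ_0: | ∫_{ℝ^n} U_{P^h,Λ_h}(x)^{(n+2s)/(n−2s)} (∂U_{P^i,Λ_i}/∂Λ_i)(x) dx − c_0 ∂ε_{ih}/∂Λ_i | ≤ C Λ_i^{−1} ε_{ih}^{n/(n−2s)} |log ε_{ih}|. -/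

import Mathlib

/-!
After centring the `h`-th bubble at the origin and rescaling it to unit width, both the integral
and `∂ε/∂Λ` carry the factor `Λ⁻¹ λ ^ m` with `λ = Λᵢ / Λₕ`, and what remains is to compare
`∫ (1 + |y|²) ^ (-q) ψ(1 + λ² |b + y|²) dy` with `(∫ (1 + |y|²) ^ (-q) dy) ψ(1 + λ² |b|² + λ²)`,
where `m = (n - 2s) / 2`, `q = (n + 2s) / 2` and `ψ u = 2 u ^ (-(m + 1)) - u ^ (-m)`.

Because the weight is even, the convolution only sees the centred second differences of its
argument at `b`, which gain a factor `(|y| / |b|)²` for `|y| ≤ |b| / 4`. After the substitution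
`y = |b| z` the integrand is `|b| ^ (-2 (m + q))` times a function of `z` with an integrable
majorant: `|z| ^ (2 - 2q)` near the origin, where `2q < n + 2` makes the quadratic gain decisive,
the singularity `|e ± z| ^ (-2m)` near the two unit vectors `∓ e`, and `|z| ^ (-2q)` at infinity.
Since `m + q = n`, the error is `O(|b| ^ (-n))`, which is `O(ε ^ (n / (n - 2s)))`. This bound is
free of logarithms and needs no smallness of `ε`; taking `ε ≤ e⁻¹` makes `|log ε| ≥ 1`.
-/

open MeasureTheory Module Metric Set

section RpowNeg

variable {p a u v w : ℝ}

lemma rpow_neg_tangent_le (hp : 0 ≤ p) (hu : 0 < u) (hv : 0 < v) :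
    u ^ (-p) - p * u ^ (-(p + 1)) * (v - u) ≤ v ^ (-p) := by
  have hvu : 0 < v / u := div_pos hv hu
  have bernoulli : 1 - p * (v / u - 1) ≤ (v / u) ^ (-p) :=
    calc 1 - p * (v / u - 1) ≤ 1 + Real.log (v / u) * -p := by
          nlinarith [Real.log_le_sub_one_of_pos hvu]
      _ ≤ Real.exp (Real.log (v / u) * -p) := by
          linarith [Real.add_one_le_exp (Real.log (v / u) * -p)]
      _ = (v / u) ^ (-p) := (Real.rpow_def_of_pos hvu _).symm
  calc u ^ (-p) - p * u ^ (-(p + 1)) * (v - u)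
      = u ^ (-p) * (1 - p * (v / u - 1)) := by
        rw [neg_add', Real.rpow_sub_one hu.ne']; field_simp
    _ ≤ u ^ (-p) * (v / u) ^ (-p) := by gcongr
    _ = v ^ (-p) := by rw [← Real.mul_rpow hu.le hvu.le, mul_div_cancel₀ v hu.ne']

lemma abs_rpow_neg_sub_rpow_neg_le (hp : 0 ≤ p) (ha : 0 < a) (hu : a ≤ u) (hv : a ≤ v) :
    |v ^ (-p) - u ^ (-p)| ≤ p * a ^ (-(p + 1)) * |v - u| := by
  wlog huv : u ≤ v generalizing u v
  · rw [abs_sub_comm, abs_sub_comm v]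
    exact this hv hu (le_of_not_ge huv)
  have hu0 : 0 < u := ha.trans_le hu
  have anti : v ^ (-p) ≤ u ^ (-p) := Real.rpow_le_rpow_of_nonpos hu0 huv (by linarith)
  have slope : u ^ (-(p + 1)) ≤ a ^ (-(p + 1)) := Real.rpow_le_rpow_of_nonpos ha hu (by linarith)
  rw [abs_sub_comm, abs_of_nonneg (sub_nonneg.2 anti), abs_of_nonneg (sub_nonneg.2 huv)]
  calc u ^ (-p) - v ^ (-p) ≤ p * u ^ (-(p + 1)) * (v - u) := by
        linarith [rpow_neg_tangent_le hp hu0 (ha.trans_le hv)]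
    _ ≤ p * a ^ (-(p + 1)) * (v - u) := by gcongr

lemma abs_rpow_neg_sub_tangent_le (hp : 0 ≤ p) (ha : 0 < a) (hu : a ≤ u) (hv : a ≤ v) :
    |v ^ (-p) - u ^ (-p) + p * u ^ (-(p + 1)) * (v - u)| ≤
      p * (p + 1) * a ^ (-(p + 2)) * (v - u) ^ 2 := by
  have tangent_u := rpow_neg_tangent_le hp (ha.trans_le hu) (ha.trans_le hv)
  have tangent_v := rpow_neg_tangent_le hp (ha.trans_le hv) (ha.trans_le hu)
  have lipschitz := abs_rpow_neg_sub_rpow_neg_le (p := p + 1) (by linarith) ha hu hv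
  rw [add_assoc, one_add_one_eq_two] at lipschitz
  rw [abs_of_nonneg (by linarith)]
  calc v ^ (-p) - u ^ (-p) + p * u ^ (-(p + 1)) * (v - u)
      ≤ p * (-(v ^ (-(p + 1)) - u ^ (-(p + 1))) * (v - u)) := by linarith
    _ ≤ p * (|v ^ (-(p + 1)) - u ^ (-(p + 1))| * |v - u|) := by
        rw [← abs_neg (_ - _), ← abs_mul]
        gcongr
        exact le_abs_self _
    _ ≤ p * ((p + 1) * a ^ (-(p + 2)) * |v - u| * |v - u|) := by gcongr
    _ = p * (p + 1) * a ^ (-(p + 2)) * (v - u) ^ 2 := by rw [← sq_abs (v - u)]; ring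

lemma abs_rpow_neg_add_rpow_neg_sub_le (hp : 0 ≤ p) (ha : 0 < a) (hu : a ≤ u) (hv : a ≤ v)
    (hw : a ≤ w) :
    |v ^ (-p) + w ^ (-p) - 2 * u ^ (-p)| ≤
      p * a ^ (-(p + 1)) * |v + w - 2 * u| +
        p * (p + 1) * a ^ (-(p + 2)) * ((v - u) ^ 2 + (w - u) ^ 2) := by
  have taylor_v := abs_rpow_neg_sub_tangent_le hp ha hu hv
  have taylor_w := abs_rpow_neg_sub_tangent_le hp ha hu hw
  have slope : u ^ (-(p + 1)) ≤ a ^ (-(p + 1)) := Real.rpow_le_rpow_of_nonpos ha hu (by linarith)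
  have linear : |p * u ^ (-(p + 1)) * (v + w - 2 * u)| ≤
      p * a ^ (-(p + 1)) * |v + w - 2 * u| := by
    have hu0 : 0 < u := ha.trans_le hu
    rw [abs_mul, abs_of_nonneg (by positivity)]
    gcongr
  rw [abs_le] at *
  constructor <;> linarith

lemma abs_rpow_neg_second_diff_le {δ : ℝ} (hp : 0 ≤ p) (hu : 0 < u) (hv : u / 2 ≤ v)
    (hw : u / 2 ≤ w) (hvw : |v + w - 2 * u| ≤ u * δ) (hvu : (v - u) ^ 2 ≤ u ^ 2 * δ)
    (hwu : (w - u) ^ 2 ≤ u ^ 2 * δ) :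
    |v ^ (-p) + w ^ (-p) - 2 * u ^ (-p)| ≤
      (p * 2 ^ (p + 1) + p * (p + 1) * 2 ^ (p + 3)) * u ^ (-p) * δ := by
  have rpow_one : (u / 2) ^ (-(p + 1)) = 2 ^ (p + 1) * (u ^ (-p) / u) := by
    rw [Real.div_rpow hu.le two_pos.le, Real.rpow_neg two_pos.le, neg_add' p,
      Real.rpow_sub_one hu.ne', div_inv_eq_mul, mul_comm]
  have rpow_two : (u / 2) ^ (-(p + 2)) = 2 ^ (p + 2) * (u ^ (-p) / u ^ 2) := by
    rw [Real.div_rpow hu.le two_pos.le, Real.rpow_neg two_pos.le, neg_add' p,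
      Real.rpow_sub hu, Real.rpow_two, div_inv_eq_mul, mul_comm]
  have two_rpow : (2 : ℝ) ^ (p + 3) = 2 ^ (p + 2) * 2 := by
    rw [← Real.rpow_add_one two_ne_zero]
    ring_nf
  calc |v ^ (-p) + w ^ (-p) - 2 * u ^ (-p)|
      ≤ p * (u / 2) ^ (-(p + 1)) * |v + w - 2 * u| +
          p * (p + 1) * (u / 2) ^ (-(p + 2)) * ((v - u) ^ 2 + (w - u) ^ 2) :=
        abs_rpow_neg_add_rpow_neg_sub_le hp (half_pos hu) (half_le_self hu.le) hv hw
    _ ≤ p * (u / 2) ^ (-(p + 1)) * (u * δ) +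
          p * (p + 1) * (u / 2) ^ (-(p + 2)) * (u ^ 2 * δ + u ^ 2 * δ) := by gcongr
    _ = (p * 2 ^ (p + 1) + p * (p + 1) * 2 ^ (p + 3)) * u ^ (-p) * δ := by
        rw [rpow_one, rpow_two, two_rpow]
        field_simp
        ring

lemma one_add_sq_rpow_neg_le {q r : ℝ} (hq : 0 ≤ q) (hr : 0 < r) :
    (1 + r ^ 2) ^ (-q) ≤ r ^ (-(2 * q)) := by
  rw [neg_mul_eq_mul_neg, Real.rpow_mul hr.le, Real.rpow_two]
  exact Real.rpow_le_rpow_of_nonpos (by positivity) (by linarith) (by linarith)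

lemma rpow_neg_le_const_mul_one_add_sq_rpow_neg {q c r : ℝ} (hq : 0 ≤ q) (hr : 0 < r)
    (hc : 1 + r ^ 2 ≤ c * r ^ 2) : r ^ (-(2 * q)) ≤ c ^ q * (1 + r ^ 2) ^ (-q) := by
  have hc0 : 0 < c := pos_of_mul_pos_left ((by positivity : (0 : ℝ) < 1 + r ^ 2).trans_le hc)
    (sq_nonneg r)
  calc r ^ (-(2 * q)) = c ^ q * (c * r ^ 2) ^ (-q) := by
        rw [Real.mul_rpow hc0.le (sq_nonneg r), Real.rpow_neg hc0.le,
          mul_inv_cancel_left₀ (by positivity), neg_mul_eq_mul_neg, Real.rpow_mul hr.le,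
          Real.rpow_two]
    _ ≤ c ^ q * (1 + r ^ 2) ^ (-q) :=
        mul_le_mul_of_nonneg_left
          (Real.rpow_le_rpow_of_nonpos (by positivity) hc (by linarith)) (by positivity)

end RpowNeg

section SecondDifference

/-- `g` decays like `‖x‖ ^ (-2m)` at infinity, with centred second differences as small as those
of a twice differentiable function homogeneous of degree `-2m`. Both bounds carry the same
constant `A`, and the weight `(1 + ‖x‖ ^ 2) ^ (-m)` includes boundedness near the origin. -/
structure HasSymmetricDecay {E : Type*} [NormedAddCommGroup E] [MeasurableSpace E]
    (g : E → ℝ) (m A : ℝ) : Prop where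
  measurable : Measurable g
  abs_le : ∀ x, |g x| ≤ A * (1 + ‖x‖ ^ 2) ^ (-m)
  abs_second_diff_le : ∀ x y, ‖y‖ ≤ ‖x‖ / 4 →
    |g (x + y) + g (x - y) - 2 * g x| ≤ A * (1 + ‖x‖ ^ 2) ^ (-m) * (‖y‖ / ‖x‖) ^ 2

namespace HasSymmetricDecay

variable {E : Type*} [NormedAddCommGroup E] [MeasurableSpace E] {f g : E → ℝ} {m A B : ℝ}

lemma nonneg (hg : HasSymmetricDecay g m A) : 0 ≤ A := by
  simpa using (abs_nonneg _).trans (hg.abs_le 0)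

lemma abs_le_const (hg : HasSymmetricDecay g m A) (hm : 0 ≤ m) (x : E) : |g x| ≤ A :=
  (hg.abs_le x).trans <| mul_le_of_le_one_right hg.nonneg <|
    Real.rpow_le_one_of_one_le_of_nonpos (by linarith [sq_nonneg ‖x‖]) (by linarith)

lemma abs_le_rpow_norm (hg : HasSymmetricDecay g m A) (hm : 0 ≤ m) {x : E} (hx : x ≠ 0) :
    |g x| ≤ A * ‖x‖ ^ (-(2 * m)) :=
  (hg.abs_le x).trans <|
    mul_le_mul_of_nonneg_left (one_add_sq_rpow_neg_le hm (norm_pos_iff.2 hx)) hg.nonneg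

lemma const_mul (hf : HasSymmetricDecay f m A) (c : ℝ) :
    HasSymmetricDecay (fun x => c * f x) m (|c| * A) where
  measurable := hf.measurable.const_mul c
  abs_le x := by
    rw [abs_mul, mul_assoc]
    exact mul_le_mul_of_nonneg_left (hf.abs_le x) (abs_nonneg c)
  abs_second_diff_le x y hy := by
    rw [show c * f (x + y) + c * f (x - y) - 2 * (c * f x) =
      c * (f (x + y) + f (x - y) - 2 * f x) by ring, abs_mul, mul_assoc, mul_assoc, ← mul_assoc A]
    exact mul_le_mul_of_nonneg_left (hf.abs_second_diff_le x y hy) (abs_nonneg c)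

lemma sub (hf : HasSymmetricDecay f m A) (hg : HasSymmetricDecay g m B) :
    HasSymmetricDecay (fun x => f x - g x) m (A + B) where
  measurable := hf.measurable.sub hg.measurable
  abs_le x := by
    rw [add_mul]
    exact (abs_sub _ _).trans (add_le_add (hf.abs_le x) (hg.abs_le x))
  abs_second_diff_le x y hy := by
    rw [show f (x + y) - g (x + y) + (f (x - y) - g (x - y)) - 2 * (f x - g x) =
      (f (x + y) + f (x - y) - 2 * f x) - (g (x + y) + g (x - y) - 2 * g x) by ring,
      add_mul, add_mul]
    exact (abs_sub _ _).trans
      (add_le_add (hf.abs_second_diff_le x y hy) (hg.abs_second_diff_le x y hy))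

lemma integrable_mul_comp {μ : Measure E} {w : E → ℝ} (hg : HasSymmetricDecay g m A) (hm : 0 ≤ m)
    (hw : Integrable w μ) {φ : E → E} (hφ : Measurable φ) :
    Integrable (fun y => w y * g (φ y)) μ :=
  hw.mul_bdd (c := A) (hg.measurable.comp hφ).aestronglyMeasurable
    (ae_of_all _ fun y => hg.abs_le_const hm (φ y))

lemma abs_integral_mul_sub_le_two_mul [BorelSpace E] {μ : Measure E} {w : E → ℝ}
    (hg : HasSymmetricDecay g m A) (hm : 0 ≤ m) (hw : Integrable w μ) (hw0 : ∀ y, 0 ≤ w y) (x : E) :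
    |(∫ y, w y * g (x + y) ∂μ) - (∫ y, w y ∂μ) * g x| ≤ 2 * (∫ y, w y ∂μ) * A := by
  have shifted : |∫ y, w y * g (x + y) ∂μ| ≤ (∫ y, w y ∂μ) * A := by
    rw [← integral_mul_const, ← Real.norm_eq_abs]
    refine norm_integral_le_of_norm_le (hw.mul_const A) (ae_of_all _ fun y => ?_)
    rw [norm_mul, Real.norm_of_nonneg (hw0 y)]
    exact mul_le_mul_of_nonneg_left (hg.abs_le_const hm _) (hw0 y)
  have centred : |(∫ y, w y ∂μ) * g x| ≤ (∫ y, w y ∂μ) * A := by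
    have mass_nonneg : 0 ≤ ∫ y, w y ∂μ := integral_nonneg hw0
    rw [abs_mul, abs_of_nonneg mass_nonneg]
    exact mul_le_mul_of_nonneg_left (hg.abs_le_const hm x) mass_nonneg
  exact (abs_sub _ _).trans (by linarith)

lemma integral_mul_second_diff [BorelSpace E] {μ : Measure E} [μ.IsNegInvariant] {w : E → ℝ}
    (hg : HasSymmetricDecay g m A) (hm : 0 ≤ m) (hw : Integrable w μ)
    (hw_even : ∀ y, w (-y) = w y) (x : E) :
    ∫ y, w y * (g (x + y) + g (x - y) - 2 * g x) ∂μ =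
      2 * ((∫ y, w y * g (x + y) ∂μ) - (∫ y, w y ∂μ) * g x) := by
  have plus := hg.integrable_mul_comp hm hw (measurable_const_add x)
  have minus := hg.integrable_mul_comp hm hw (measurable_const_sub x)
  have reflect : ∫ y, w y * g (x - y) ∂μ = ∫ y, w y * g (x + y) ∂μ := by
    rw [← integral_neg_eq_self]
    simp only [hw_even, sub_neg_eq_add]
  calc _ = ∫ y, w y * g (x + y) + w y * g (x - y) - w y * (2 * g x) ∂μ := by
        congr with y
        ring
    _ = _ := by
        rw [integral_sub (plus.fun_add minus) (hw.mul_const _), integral_add plus minus, reflect,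
          integral_mul_const]
        ring

end HasSymmetricDecay

variable {E : Type*} [NormedAddCommGroup E]

lemma half_one_add_sq_norm_le (lam : ℝ) {x y : E} (hy : ‖y‖ ≤ ‖x‖ / 4) :
    (1 + lam ^ 2 * ‖x‖ ^ 2) / 2 ≤ 1 + lam ^ 2 * ‖x + y‖ ^ 2 := by
  have norm_le : 3 / 4 * ‖x‖ ≤ ‖x + y‖ := by linarith [norm_sub_le_norm_add x y]
  have sq_le : ‖x‖ ^ 2 / 2 ≤ ‖x + y‖ ^ 2 := by nlinarith [norm_nonneg x]
  nlinarith [mul_le_mul_of_nonneg_left sq_le (sq_nonneg lam)]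

variable [InnerProductSpace ℝ E]

lemma abs_one_add_sq_norm_add_sub_le (lam : ℝ) {x y : E} (hy : ‖y‖ ≤ ‖x‖) :
    |(1 + lam ^ 2 * ‖x + y‖ ^ 2) - (1 + lam ^ 2 * ‖x‖ ^ 2)| ≤ 3 * lam ^ 2 * (‖x‖ * ‖y‖) := by
  have inner_le := abs_le.1 (abs_real_inner_le_norm x y)
  have sq_le : ‖y‖ ^ 2 ≤ ‖x‖ * ‖y‖ := by nlinarith [norm_nonneg y]
  rw [norm_add_sq_real, show (1 + lam ^ 2 * (‖x‖ ^ 2 + 2 * inner ℝ x y + ‖y‖ ^ 2)) -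
    (1 + lam ^ 2 * ‖x‖ ^ 2) = lam ^ 2 * (2 * inner ℝ x y + ‖y‖ ^ 2) by ring,
    abs_mul, abs_of_nonneg (sq_nonneg lam), mul_comm 3, mul_assoc]
  gcongr
  rw [abs_le]
  constructor <;> nlinarith [sq_nonneg ‖y‖]

lemma exists_abs_second_diff_one_add_sq_rpow_neg_le {p : ℝ} (hp : 0 ≤ p) :
    ∃ K ≥ 0, ∀ (lam : ℝ) (x y : E), ‖y‖ ≤ ‖x‖ / 4 →
      |(1 + lam ^ 2 * ‖x + y‖ ^ 2) ^ (-p) + (1 + lam ^ 2 * ‖x - y‖ ^ 2) ^ (-p) -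
          2 * (1 + lam ^ 2 * ‖x‖ ^ 2) ^ (-p)| ≤
        K * (1 + lam ^ 2 * ‖x‖ ^ 2) ^ (-p) * (‖y‖ / ‖x‖) ^ 2 := by
  refine ⟨(p * 2 ^ (p + 1) + p * (p + 1) * 2 ^ (p + 3)) * 9, by positivity, fun lam x y hy => ?_⟩
  set u := 1 + lam ^ 2 * ‖x‖ ^ 2 with hu
  have hu0 : 0 < u := by positivity
  have hy_le : ‖y‖ ≤ ‖x‖ := by linarith [norm_nonneg x]
  have sq_norm_le : lam ^ 2 * ‖x‖ ^ 2 ≤ u := by linarith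
  obtain ⟨ρ, hρ, hyρ⟩ : ∃ ρ, ρ = ‖y‖ / ‖x‖ ∧ ‖y‖ = ‖x‖ * ρ := by
    refine ⟨_, rfl, ?_⟩
    rcases eq_or_ne ‖x‖ 0 with hx | hx
    · simpa [hx] using hy_le
    · field_simp
  have diff_sq_le (z : E) (hz : ‖z‖ = ‖y‖) : ((1 + lam ^ 2 * ‖x + z‖ ^ 2) - u) ^ 2 ≤
      u ^ 2 * (9 * ρ ^ 2) :=
    calc _ ≤ (3 * lam ^ 2 * (‖x‖ * ‖z‖)) ^ 2 :=
          sq_le_sq.2 <| (abs_one_add_sq_norm_add_sub_le lam (hz.trans_le hy_le)).trans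
            (le_abs_self _)
      _ = (lam ^ 2 * ‖x‖ ^ 2) ^ 2 * (9 * ρ ^ 2) := by rw [hz, hyρ]; ring
      _ ≤ u ^ 2 * (9 * ρ ^ 2) := by gcongr
  have sum_le : |(1 + lam ^ 2 * ‖x + y‖ ^ 2) + (1 + lam ^ 2 * ‖x + -y‖ ^ 2) - 2 * u| ≤
      u * (9 * ρ ^ 2) := by
    rw [show (1 + lam ^ 2 * ‖x + y‖ ^ 2) + (1 + lam ^ 2 * ‖x + -y‖ ^ 2) - 2 * u =
      lam ^ 2 * ‖x‖ ^ 2 * (2 * ρ ^ 2) by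
        rw [norm_add_sq_real, norm_add_sq_real, inner_neg_right, norm_neg, hu, hyρ]; ring,
      abs_of_nonneg (by positivity)]
    gcongr
    norm_num
  rw [← hρ, sub_eq_add_neg x y, mul_right_comm _ 9, mul_assoc _ 9]
  exact abs_rpow_neg_second_diff_le hp hu0 (half_one_add_sq_norm_le lam hy)
    (half_one_add_sq_norm_le lam ((norm_neg y).trans_le hy)) sum_le
    (diff_sq_le y rfl) (diff_sq_le (-y) (norm_neg y))

lemma one_add_sq_mul_rpow_neg_le {m p c lam r : ℝ} (hm : 0 ≤ m) (hmp : m ≤ p) (hc0 : 0 < c)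
    (hc1 : c ≤ 1) (hlam : c ≤ lam) :
    (1 + lam ^ 2 * r ^ 2) ^ (-p) ≤ (c ^ 2) ^ (-m) * (1 + r ^ 2) ^ (-m) := by
  have sq_le_sq : c ^ 2 ≤ lam ^ 2 := by gcongr
  have sq_le_one : c ^ 2 ≤ 1 := pow_le_one₀ hc0.le hc1
  calc (1 + lam ^ 2 * r ^ 2) ^ (-p) ≤ (1 + lam ^ 2 * r ^ 2) ^ (-m) :=
        Real.rpow_le_rpow_of_exponent_le (by linarith [mul_nonneg (sq_nonneg lam) (sq_nonneg r)])
          (by linarith)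
    _ ≤ (c ^ 2 * (1 + r ^ 2)) ^ (-m) :=
        Real.rpow_le_rpow_of_nonpos (by positivity) (by nlinarith [sq_nonneg r]) (by linarith)
    _ = (c ^ 2) ^ (-m) * (1 + r ^ 2) ^ (-m) := Real.mul_rpow (by positivity) (by positivity)

variable [MeasurableSpace E] [BorelSpace E]

lemma exists_hasSymmetricDecay_one_add_sq_rpow_neg {m p c : ℝ} (hm : 0 ≤ m) (hmp : m ≤ p)
    (hc0 : 0 < c) (hc1 : c ≤ 1) :
    ∃ A, ∀ lam, c ≤ lam →
      HasSymmetricDecay (fun x : E => (1 + lam ^ 2 * ‖x‖ ^ 2) ^ (-p)) m A := by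
  obtain ⟨K, hK0, hK⟩ := exists_abs_second_diff_one_add_sq_rpow_neg_le (E := E) (hm.trans hmp)
  refine ⟨(K + 1) * (c ^ 2) ^ (-m), fun lam hlam => ⟨by fun_prop, fun x => ?_, fun x y hy => ?_⟩⟩
  · rw [abs_of_nonneg (by positivity), mul_assoc]
    exact (one_add_sq_mul_rpow_neg_le hm hmp hc0 hc1 hlam).trans
      (le_mul_of_one_le_left (by positivity) (by linarith))
  · refine (hK lam x y hy).trans ?_
    rw [mul_assoc (K + 1)]
    gcongr
    exacts [by linarith, one_add_sq_mul_rpow_neg_le hm hmp hc0 hc1 hlam]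

end SecondDifference

section Convolution

variable {E : Type*} [NormedAddCommGroup E]

/-- The power `‖z‖ ^ p` restricted to the unit ball and extended by zero, for `p` negative a
model for a locally integrable singularity at the origin. -/
noncomputable def ballPow (p : ℝ) : E → ℝ := (ball 0 1).indicator fun z => ‖z‖ ^ p

lemma ballPow_nonneg (p : ℝ) (z : E) : 0 ≤ ballPow p z :=
  indicator_nonneg (fun _ _ => by positivity) z

lemma ballPow_of_norm_lt_one (p : ℝ) {z : E} (hz : ‖z‖ < 1) : ballPow p z = ‖z‖ ^ p :=
  indicator_of_mem (mem_ball_zero_iff.2 hz) _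

lemma norm_rpow_neg_le_one_add_ballPow {p : ℝ} (hp : 0 ≤ p) (z : E) :
    ‖z‖ ^ (-p) ≤ 1 + ballPow (-p) z := by
  rcases lt_or_ge ‖z‖ 1 with hz | hz
  · rw [ballPow_of_norm_lt_one _ hz]
    linarith
  · exact (Real.rpow_le_one_of_one_le_of_nonpos hz (by linarith)).trans
      (le_add_of_nonneg_right (ballPow_nonneg _ z))

/-- An integrable majorant, up to constants, of `‖z‖ ^ (-2q)` times the second difference with
step `z` at the point `e` of a function homogeneous of degree `-2m`. -/
noncomputable def secondDiffMajorant (m q : ℝ) (e z : E) : ℝ :=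
  ballPow (2 - 2 * q) z + 4 * (1 + ‖z‖ ^ 2) ^ (-q) +
    (ballPow (-(2 * m)) (e + z) + ballPow (-(2 * m)) (e - z))

lemma secondDiffMajorant_nonneg (m q : ℝ) (e z : E) : 0 ≤ secondDiffMajorant m q e z :=
  add_nonneg (add_nonneg (ballPow_nonneg _ z) (by positivity))
    (add_nonneg (ballPow_nonneg _ _) (ballPow_nonneg _ _))

lemma norm_rpow_mul_sq_le_secondDiffMajorant (m q : ℝ) (e : E) {z : E} (hz : z ≠ 0)
    (hz1 : ‖z‖ < 1) : ‖z‖ ^ (-(2 * q)) * ‖z‖ ^ 2 ≤ secondDiffMajorant m q e z := by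
  have plus_nonneg := ballPow_nonneg (-(2 * m)) (e + z)
  have minus_nonneg := ballPow_nonneg (-(2 * m)) (e - z)
  have weight_nonneg : 0 ≤ (1 + ‖z‖ ^ 2) ^ (-q) := by positivity
  calc ‖z‖ ^ (-(2 * q)) * ‖z‖ ^ 2 = ballPow (2 - 2 * q) z := by
        rw [ballPow_of_norm_lt_one _ hz1, ← Real.rpow_two, ← Real.rpow_add (norm_pos_iff.2 hz)]
        ring_nf
    _ ≤ secondDiffMajorant m q e z := by
        unfold secondDiffMajorant
        linarith

lemma one_add_sq_rpow_neg_mul_le_secondDiffMajorant {m q : ℝ} (hm : 0 ≤ m) (hq : 0 ≤ q) (e z : E) :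
    (1 + ‖z‖ ^ 2) ^ (-q) * (‖e + z‖ ^ (-(2 * m)) + ‖e - z‖ ^ (-(2 * m)) + 2) ≤
      secondDiffMajorant m q e z := by
  have plus_le := norm_rpow_neg_le_one_add_ballPow (by positivity : 0 ≤ 2 * m) (e + z)
  have minus_le := norm_rpow_neg_le_one_add_ballPow (by positivity : 0 ≤ 2 * m) (e - z)
  have plus_nonneg := ballPow_nonneg (-(2 * m)) (e + z)
  have minus_nonneg := ballPow_nonneg (-(2 * m)) (e - z)
  have weight_nonneg : 0 ≤ (1 + ‖z‖ ^ 2) ^ (-q) := by positivity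
  have weight_le_one : (1 + ‖z‖ ^ 2) ^ (-q) ≤ 1 :=
    Real.rpow_le_one_of_one_le_of_nonpos (by linarith [sq_nonneg ‖z‖]) (by linarith)
  calc _ ≤ (1 + ‖z‖ ^ 2) ^ (-q) *
          (4 + (ballPow (-(2 * m)) (e + z) + ballPow (-(2 * m)) (e - z))) :=
        mul_le_mul_of_nonneg_left (by linarith) weight_nonneg
    _ ≤ 4 * (1 + ‖z‖ ^ 2) ^ (-q) +
          (ballPow (-(2 * m)) (e + z) + ballPow (-(2 * m)) (e - z)) := by
        rw [mul_add, mul_comm _ (4 : ℝ)]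
        gcongr
        exact mul_le_of_le_one_left (by positivity) weight_le_one
    _ ≤ secondDiffMajorant m q e z := by
        unfold secondDiffMajorant
        linarith [ballPow_nonneg (2 - 2 * q) z]

variable [NormedSpace ℝ E] [MeasurableSpace E]

namespace HasSymmetricDecay

variable {g : E → ℝ} {m A d : ℝ} {e z : E}

lemma abs_second_diff_smul_le_near (hg : HasSymmetricDecay g m A) (hm : 0 ≤ m) (hd : 0 < d)
    (he : ‖e‖ = 1) (hz : ‖z‖ ≤ 1 / 4) :
    |g (d • e + d • z) + g (d • e - d • z) - 2 * g (d • e)| ≤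
      A * d ^ (-(2 * m)) * ‖z‖ ^ 2 := by
  have norm_smul_d (v : E) : ‖d • v‖ = d * ‖v‖ := norm_smul_of_nonneg hd.le v
  refine (hg.abs_second_diff_le (d • e) (d • z) ?_).trans ?_
  · rw [norm_smul_d, norm_smul_d, he]
    nlinarith
  · rw [norm_smul_d, norm_smul_d, he, mul_one, mul_div_cancel_left₀ _ hd.ne']
    have := hg.nonneg
    gcongr
    exact one_add_sq_rpow_neg_le hm hd

lemma abs_second_diff_smul_le_far (hg : HasSymmetricDecay g m A) (hm : 0 ≤ m) (hd : 0 < d)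
    (he : ‖e‖ = 1) (hadd : e + z ≠ 0) (hsub : e - z ≠ 0) :
    |g (d • e + d • z) + g (d • e - d • z) - 2 * g (d • e)| ≤
      A * d ^ (-(2 * m)) * (‖e + z‖ ^ (-(2 * m)) + ‖e - z‖ ^ (-(2 * m)) + 2) := by
  have abs_le_smul {v : E} (hv : v ≠ 0) :
      |g (d • v)| ≤ A * d ^ (-(2 * m)) * ‖v‖ ^ (-(2 * m)) := by
    rw [mul_assoc, ← Real.mul_rpow hd.le (norm_nonneg v), ← norm_smul_of_nonneg hd.le]
    exact hg.abs_le_rpow_norm hm (smul_ne_zero hd.ne' hv)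
  have center := abs_le_smul (norm_ne_zero_iff.1 (he ▸ one_ne_zero))
  rw [he, Real.one_rpow] at center
  rw [← smul_add, ← smul_sub]
  calc _ ≤ |g (d • (e + z))| + |g (d • (e - z))| + 2 * |g (d • e)| := by
        refine (abs_sub _ _).trans ?_
        rw [abs_mul, abs_two]
        gcongr
        exact abs_add_le _ _
    _ ≤ _ := by linarith [abs_le_smul hadd, abs_le_smul hsub]

lemma weight_mul_abs_second_diff_smul_le {q : ℝ} (hg : HasSymmetricDecay g m A) (hm : 0 ≤ m)
    (hq : 0 ≤ q) (hd : 0 < d) (he : ‖e‖ = 1) (hz : z ≠ 0) (hadd : e + z ≠ 0)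
    (hsub : e - z ≠ 0) :
    (1 + ‖d • z‖ ^ 2) ^ (-q) * |g (d • e + d • z) + g (d • e - d • z) - 2 * g (d • e)| ≤
      A * d ^ (-(2 * (m + q))) * 17 ^ q * secondDiffMajorant m q e z := by
  have hA := hg.nonneg
  have hz0 : 0 < ‖z‖ := norm_pos_iff.2 hz
  have d_rpow : d ^ (-(2 * (m + q))) = d ^ (-(2 * q)) * d ^ (-(2 * m)) := by
    rw [← Real.rpow_add hd]
    ring_nf
  suffices reduced : ∃ D, |g (d • e + d • z) + g (d • e - d • z) - 2 * g (d • e)| ≤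
      A * d ^ (-(2 * m)) * D ∧ ‖z‖ ^ (-(2 * q)) * D ≤ 17 ^ q * secondDiffMajorant m q e z by
    obtain ⟨D, diff_le, hD⟩ := reduced
    have weight_le : (1 + ‖d • z‖ ^ 2) ^ (-q) ≤ d ^ (-(2 * q)) * ‖z‖ ^ (-(2 * q)) := by
      rw [norm_smul_of_nonneg hd.le, ← Real.mul_rpow hd.le hz0.le]
      exact one_add_sq_rpow_neg_le hq (by positivity)
    calc _ ≤ d ^ (-(2 * q)) * ‖z‖ ^ (-(2 * q)) * (A * d ^ (-(2 * m)) * D) := by gcongr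
      _ = A * d ^ (-(2 * (m + q))) * (‖z‖ ^ (-(2 * q)) * D) := by rw [d_rpow]; ring
      _ ≤ A * d ^ (-(2 * (m + q))) * (17 ^ q * secondDiffMajorant m q e z) := by gcongr
      _ = _ := by ring
  rcases le_or_gt ‖z‖ (1 / 4) with near | far
  · refine ⟨‖z‖ ^ 2, hg.abs_second_diff_smul_le_near hm hd he near, ?_⟩
    exact (norm_rpow_mul_sq_le_secondDiffMajorant m q e hz (by linarith)).trans <|
      le_mul_of_one_le_left (secondDiffMajorant_nonneg m q e z)
        (Real.one_le_rpow (by norm_num) hq)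
  · refine ⟨_, hg.abs_second_diff_smul_le_far hm hd he hadd hsub, ?_⟩
    calc _ ≤ 17 ^ q * (1 + ‖z‖ ^ 2) ^ (-q) *
            (‖e + z‖ ^ (-(2 * m)) + ‖e - z‖ ^ (-(2 * m)) + 2) := by
          gcongr
          exact rpow_neg_le_const_mul_one_add_sq_rpow_neg hq hz0 (by nlinarith)
      _ ≤ 17 ^ q * secondDiffMajorant m q e z := by
          rw [mul_assoc]
          gcongr
          exact one_add_sq_rpow_neg_mul_le_secondDiffMajorant hm hq e z

end HasSymmetricDecay

end Convolution

section Integral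

variable {E : Type*} [NormedAddCommGroup E] [NormedSpace ℝ E] [FiniteDimensional ℝ E]
  [MeasurableSpace E] [BorelSpace E] (μ : Measure E) [μ.IsAddHaarMeasure]

lemma integrable_one_add_sq_rpow_neg {q : ℝ} (hq : finrank ℝ E < 2 * q) :
    Integrable (fun y : E => (1 + ‖y‖ ^ 2) ^ (-q)) μ := by
  simpa [neg_div] using integrable_rpow_neg_one_add_norm_sq (μ := μ) hq

variable [Nontrivial E]

lemma integrable_ballPow {p : ℝ} (hp : -(finrank ℝ E : ℝ) < p) :
    Integrable (ballPow p : E → ℝ) μ := by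
  rw [ballPow, integrable_indicator_iff measurableSet_ball]
  refine integrableOn_ball_of_norm_le_rpow (C := 1) (α := -p) finrank_pos (by linarith)
    (ae_of_all _ fun x => ?_)
    (by fun_prop : Measurable fun z : E => ‖z‖ ^ p).aestronglyMeasurable
  rw [neg_neg, one_mul, Real.norm_of_nonneg (by positivity)]

variable {m q : ℝ}

lemma integrable_secondDiffMajorant (hm : 2 * m < finrank ℝ E) (hq : finrank ℝ E < 2 * q)
    (hq2 : 2 * q < finrank ℝ E + 2) (e : E) : Integrable (secondDiffMajorant m q e) μ := by
  have singular : Integrable (ballPow (-(2 * m)) : E → ℝ) μ := integrable_ballPow μ (by linarith)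
  exact ((integrable_ballPow μ (by linarith)).add
    ((integrable_one_add_sq_rpow_neg μ hq).const_mul 4)).add
      ((singular.comp_add_left e).add (singular.comp_sub_left e))

lemma integral_secondDiffMajorant (hm : 2 * m < finrank ℝ E) (hq : finrank ℝ E < 2 * q)
    (hq2 : 2 * q < finrank ℝ E + 2) (e : E) :
    ∫ z, secondDiffMajorant m q e z ∂μ =
      (∫ z : E, ballPow (2 - 2 * q) z + 4 * (1 + ‖z‖ ^ 2) ^ (-q) ∂μ) +
        2 * ∫ z : E, ballPow (-(2 * m)) z ∂μ := by
  have centred : Integrable (fun z : E => ballPow (2 - 2 * q) z + 4 * (1 + ‖z‖ ^ 2) ^ (-q)) μ :=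
    (integrable_ballPow μ (by linarith)).add ((integrable_one_add_sq_rpow_neg μ hq).const_mul 4)
  have singular : Integrable (ballPow (-(2 * m)) : E → ℝ) μ := integrable_ballPow μ (by linarith)
  have plus := singular.comp_add_left e
  have minus := singular.comp_sub_left e
  simp only [secondDiffMajorant]
  rw [integral_add centred (plus.fun_add minus), integral_add plus minus,
    integral_add_left_eq_self, integral_sub_left_eq_self, ← two_mul]

namespace HasSymmetricDecay

variable {g : E → ℝ} {A : ℝ}

lemma abs_integral_second_diff_le (hg : HasSymmetricDecay g m A) (hm0 : 0 ≤ m)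
    (hm : 2 * m < finrank ℝ E) (hq : finrank ℝ E < 2 * q) (hq2 : 2 * q < finrank ℝ E + 2)
    {x : E} (hx : x ≠ 0) :
    |∫ y, (1 + ‖y‖ ^ 2) ^ (-q) * (g (x + y) + g (x - y) - 2 * g x) ∂μ| ≤
      A * (17 ^ q * ∫ z, secondDiffMajorant m q (0 : E) z ∂μ) *
        ‖x‖ ^ (finrank ℝ E - 2 * (m + q)) := by
  obtain ⟨d, e, hd, he, rfl⟩ : ∃ (d : ℝ) (e : E), 0 < d ∧ ‖e‖ = 1 ∧ x = d • e :=
    ⟨‖x‖, ‖x‖⁻¹ • x, norm_pos_iff.2 hx, by simp [norm_smul, hx], by simp [hx]⟩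
  have hq0 : 0 ≤ q := by linarith [(finrank ℝ E).cast_nonneg (α := ℝ)]
  have pointwise : ∀ᵐ z ∂μ,
      ‖(1 + ‖d • z‖ ^ 2) ^ (-q) * (g (d • e + d • z) + g (d • e - d • z) - 2 * g (d • e))‖ ≤
        A * d ^ (-(2 * (m + q))) * 17 ^ q * secondDiffMajorant m q e z := by
    filter_upwards [(toFinite {0, -e, e}).countable.ae_notMem μ] with z hz
    simp only [mem_insert_iff, mem_singleton_iff, not_or] at hz
    rw [norm_mul, Real.norm_of_nonneg (by positivity), Real.norm_eq_abs]
    exact hg.weight_mul_abs_second_diff_smul_le hm0 hq0 hd he hz.1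
      (fun h => hz.2.1 (eq_neg_of_add_eq_zero_right h)) (fun h => hz.2.2 (sub_eq_zero.1 h).symm)
  have scaled := norm_integral_le_of_norm_le
    ((integrable_secondDiffMajorant μ hm hq hq2 e).const_mul _) pointwise
  rw [integral_const_mul, integral_secondDiffMajorant μ hm hq hq2 e,
    ← integral_secondDiffMajorant μ hm hq hq2 0,
    Measure.integral_comp_smul_of_nonneg μ
      (fun y => (1 + ‖y‖ ^ 2) ^ (-q) * (g (d • e + y) + g (d • e - y) - 2 * g (d • e))) d
      (hR := hd.le), norm_smul, Real.norm_of_nonneg (by positivity), Real.norm_eq_abs,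
    inv_mul_le_iff₀ (by positivity)] at scaled
  rw [norm_smul_of_nonneg hd.le, he, mul_one, sub_eq_add_neg, Real.rpow_add hd, Real.rpow_natCast]
  linarith

theorem exists_abs_integral_mul_sub_le (hm0 : 0 ≤ m) (hm : 2 * m < finrank ℝ E)
    (hq : finrank ℝ E < 2 * q) (hq2 : 2 * q < finrank ℝ E + 2) :
    ∃ K ≥ 0, ∀ (g : E → ℝ) (A : ℝ), HasSymmetricDecay g m A → ∀ x,
      |(∫ y, (1 + ‖y‖ ^ 2) ^ (-q) * g (x + y) ∂μ) - (∫ y, (1 + ‖y‖ ^ 2) ^ (-q) ∂μ) * g x| ≤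
        K * A * (1 + ‖x‖ ^ 2) ^ (-(m + q - finrank ℝ E / 2)) := by
  set t : ℝ := m + q - finrank ℝ E / 2 with ht
  set W := ∫ y : E, (1 + ‖y‖ ^ 2) ^ (-q) ∂μ
  set M := 17 ^ q * ∫ z : E, secondDiffMajorant m q 0 z ∂μ with hM
  have ht0 : 0 ≤ t := by linarith
  have : 0 ≤ W := by positivity
  have hM0 : 0 ≤ M := mul_nonneg (by positivity) <|
    integral_nonneg fun z => secondDiffMajorant_nonneg m q 0 z
  have weight_integrable := integrable_one_add_sq_rpow_neg μ hq
  refine ⟨(2 * W + M) * 2 ^ t, by positivity, fun g A hg x => ?_⟩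
  have hA := hg.nonneg
  suffices reduced : ∃ b : ℝ, |(∫ y, (1 + ‖y‖ ^ 2) ^ (-q) * g (x + y) ∂μ) - W * g x| ≤
      (2 * W + M) * A * b ∧ b ≤ 2 ^ t * (1 + ‖x‖ ^ 2) ^ (-t) by
    obtain ⟨b, diff_le, hb⟩ := reduced
    calc _ ≤ (2 * W + M) * A * b := diff_le
      _ ≤ (2 * W + M) * A * (2 ^ t * (1 + ‖x‖ ^ 2) ^ (-t)) := by gcongr
      _ = _ := by ring
  rcases le_or_gt ‖x‖ 1 with near | far
  · refine ⟨1, (hg.abs_integral_mul_sub_le_two_mul hm0 weight_integrable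
      (fun y => by positivity) x).trans ?_, ?_⟩
    · linarith [mul_nonneg hM0 hA]
    · rw [Real.rpow_neg (by positivity), ← div_eq_mul_inv, one_le_div (by positivity)]
      exact Real.rpow_le_rpow (by positivity) (by nlinarith [norm_nonneg x]) ht0
  · have hx : 0 < ‖x‖ := one_pos.trans far
    refine ⟨‖x‖ ^ (-(2 * t)), ?_,
      rpow_neg_le_const_mul_one_add_sq_rpow_neg ht0 hx (by nlinarith)⟩
    have symmetrized := hg.abs_integral_second_diff_le μ hm0 hm hq hq2 (norm_pos_iff.1 hx)
    rw [hg.integral_mul_second_diff hm0 weight_integrable (by simp), abs_mul, abs_two, ← hM,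
      show (finrank ℝ E : ℝ) - 2 * (m + q) = -(2 * t) by rw [ht]; ring] at symmetrized
    have : 0 ≤ W * A * ‖x‖ ^ (-(2 * t)) := by positivity
    linarith [abs_nonneg ((∫ y, (1 + ‖y‖ ^ 2) ^ (-q) * g (x + y) ∂μ) - W * g x)]

end HasSymmetricDecay

end Integral

section Bubble

/-- The profile of the derivative of a bubble in its scale: up to elementary factors,
`∂/∂Λ (Λ / (1 + Λ² r²)) ^ m` is `dilationProfile m (1 + Λ² r²)`. -/
noncomputable def dilationProfile (m u : ℝ) : ℝ := 2 * u ^ (-(m + 1)) - u ^ (-m)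

lemma dilationProfile_eq_rpow_mul {m u : ℝ} (hu : 0 < u) :
    dilationProfile m u = u ^ (-m) * (2 / u - 1) := by
  rw [dilationProfile, neg_add', Real.rpow_sub_one hu.ne']
  ring

lemma abs_dilationProfile_add_sub_le {m u l : ℝ} (hm : 0 ≤ m) (hu : 0 < u) (hl : 0 ≤ l) :
    |dilationProfile m (u + l) - dilationProfile m u| ≤ (2 + m * l) * u ^ (-(m + 1)) := by
  have high_anti : (u + l) ^ (-(m + 1)) ≤ u ^ (-(m + 1)) :=
    Real.rpow_le_rpow_of_nonpos hu (by linarith) (by linarith)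
  have low_anti : (u + l) ^ (-m) ≤ u ^ (-m) :=
    Real.rpow_le_rpow_of_nonpos hu (by linarith) (by linarith)
  have tangent := rpow_neg_tangent_le hm hu (by positivity : 0 < u + l)
  rw [add_sub_cancel_left] at tangent
  have high_nonneg : 0 ≤ (u + l) ^ (-(m + 1)) := by positivity
  have : 0 ≤ m * l * u ^ (-(m + 1)) := by positivity
  unfold dilationProfile
  rw [abs_le]
  constructor <;> linarith

lemma exists_hasSymmetricDecay_dilationProfile {E : Type*} [NormedAddCommGroup E]
    [InnerProductSpace ℝ E] [MeasurableSpace E] [BorelSpace E] {m c : ℝ} (hm : 0 ≤ m)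
    (hc0 : 0 < c) (hc1 : c ≤ 1) :
    ∃ A, ∀ lam, c ≤ lam →
      HasSymmetricDecay (fun x : E => dilationProfile m (1 + lam ^ 2 * ‖x‖ ^ 2)) m A := by
  obtain ⟨A, hA⟩ := exists_hasSymmetricDecay_one_add_sq_rpow_neg (E := E) hm
    (le_add_of_nonneg_right zero_le_one : m ≤ m + 1) hc0 hc1
  obtain ⟨B, hB⟩ := exists_hasSymmetricDecay_one_add_sq_rpow_neg (E := E) hm le_rfl hc0 hc1
  exact ⟨|2| * A + B, fun lam hlam => ((hA lam hlam).const_mul 2).sub (hB lam hlam)⟩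

variable {E : Type*} [NormedAddCommGroup E]

/-- The bubble with centre `ξ`, scale `Λ`, exponent `m` and amplitude `C₀`; the extremals of
the fractional Sobolev inequality of order `s` in dimension `n` have `m = (n - 2s) / 2`. -/
noncomputable def bubble (C₀ m : ℝ) (ξ : E) (Λ : ℝ) (x : E) : ℝ :=
  C₀ * (Λ / (1 + Λ ^ 2 * ‖x - ξ‖ ^ 2)) ^ m

/-- The interaction `ε` of two bubbles of exponent `m` with centres `P`, `P'` and scales
`Λ`, `Λ'`. -/
noncomputable def interaction (m : ℝ) (P P' : E) (Λ Λ' : ℝ) : ℝ :=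
  (Λ / Λ' + Λ' / Λ + Λ * Λ' * ‖P - P'‖ ^ 2) ^ (-m)

variable {C₀ m q Λ Λ' κ : ℝ} {P P' ξ x : E}

lemma interaction_pos (hΛ : 0 < Λ) (hΛ' : 0 < Λ') : 0 < interaction m P P' Λ Λ' := by
  unfold interaction
  positivity

lemma hasDerivAt_rpow_const_of_logDeriv {f : ℝ → ℝ} {k p t : ℝ} (hf : HasDerivAt f (f t * k) t)
    (hft : 0 < f t) : HasDerivAt (fun r => f r ^ p) (p * k * f t ^ p) t := by
  refine (hf.rpow_const (p := p) (Or.inl hft.ne')).congr_deriv ?_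
  rw [Real.rpow_sub_one hft.ne']
  field_simp

lemma hasDerivAt_bubble (hΛ : 0 < Λ) :
    HasDerivAt (fun t => bubble C₀ m ξ t x)
      (C₀ * (m * Λ⁻¹ * Λ ^ m * dilationProfile m (1 + Λ ^ 2 * ‖x - ξ‖ ^ 2))) Λ := by
  have hu : 0 < 1 + Λ ^ 2 * ‖x - ξ‖ ^ 2 := by positivity
  have base : HasDerivAt (fun t => t / (1 + t ^ 2 * ‖x - ξ‖ ^ 2))
      (Λ / (1 + Λ ^ 2 * ‖x - ξ‖ ^ 2) * (Λ⁻¹ * (2 / (1 + Λ ^ 2 * ‖x - ξ‖ ^ 2) - 1))) Λ := by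
    refine ((hasDerivAt_id' Λ).fun_div
      (((hasDerivAt_pow 2 Λ).mul_const (‖x - ξ‖ ^ 2)).const_add 1) hu.ne').congr_deriv ?_
    field_simp
    ring
  refine ((hasDerivAt_rpow_const_of_logDeriv (p := m) base (by positivity)).const_mul
    C₀).congr_deriv ?_
  rw [dilationProfile_eq_rpow_mul hu, Real.div_rpow hΛ.le hu.le, Real.rpow_neg hu.le]
  ring

variable [NormedSpace ℝ E]

lemma interaction_base_eq (hΛ : 0 < Λ) (hΛ' : 0 < Λ') :
    Λ / Λ' + Λ' / Λ + Λ * Λ' * ‖P - P'‖ ^ 2 =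
      Λ' / Λ * (1 + (Λ / Λ') ^ 2 * ‖Λ' • (P' - P)‖ ^ 2 + (Λ / Λ') ^ 2) := by
  rw [norm_smul_of_nonneg hΛ'.le, norm_sub_rev]
  field_simp
  ring

lemma hasDerivAt_interaction (hΛ : 0 < Λ) (hΛ' : 0 < Λ') :
    HasDerivAt (fun t => interaction m P P' t Λ')
      (m * Λ⁻¹ * (Λ / Λ') ^ m *
        dilationProfile m (1 + (Λ / Λ') ^ 2 * ‖Λ' • (P' - P)‖ ^ 2 + (Λ / Λ') ^ 2)) Λ := by
  set v := 1 + (Λ / Λ') ^ 2 * ‖Λ' • (P' - P)‖ ^ 2 + (Λ / Λ') ^ 2 with hv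
  have hv0 : 0 < v := by positivity
  have base : HasDerivAt (fun t => t / Λ' + Λ' / t + t * Λ' * ‖P - P'‖ ^ 2)
      ((Λ / Λ' + Λ' / Λ + Λ * Λ' * ‖P - P'‖ ^ 2) * (Λ⁻¹ * (1 - 2 / v))) Λ := by
    refine ((((hasDerivAt_id' Λ).div_const Λ').add ((hasDerivAt_inv hΛ.ne').const_mul Λ')).add
      (((hasDerivAt_id' Λ).mul_const Λ').mul_const (‖P - P'‖ ^ 2))).congr_deriv ?_
    rw [interaction_base_eq hΛ hΛ', ← hv,
      show Λ' / Λ * v * (Λ⁻¹ * (1 - 2 / v)) = Λ' / Λ * Λ⁻¹ * (v - 2) by field_simp, hv,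
      norm_smul_of_nonneg hΛ'.le, norm_sub_rev P]
    field_simp
    ring
  refine (hasDerivAt_rpow_const_of_logDeriv (p := -m) base (by positivity)).congr_deriv ?_
  rw [interaction_base_eq hΛ hΛ', ← hv, dilationProfile_eq_rpow_mul hv0,
    Real.mul_rpow (by positivity) hv0.le, Real.rpow_neg (by positivity),
    ← Real.inv_rpow (by positivity), inv_div]
  ring

lemma bubble_add_rpow_div (hC₀ : 0 < C₀) (hm : m ≠ 0) (hΛ : 0 < Λ) :
    bubble C₀ m ξ Λ (x + ξ) ^ (q / m) =
      C₀ ^ (q / m) * (Λ ^ q * (1 + ‖Λ • x‖ ^ 2) ^ (-q)) := by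
  rw [bubble, Real.mul_rpow hC₀.le (by positivity), ← Real.rpow_mul (by positivity),
    mul_div_cancel₀ q hm, add_sub_cancel_right, norm_smul_of_nonneg hΛ.le, mul_pow,
    Real.div_rpow hΛ.le (by positivity), Real.rpow_neg (by positivity), div_eq_mul_inv (Λ ^ q)]

lemma deriv_bubble_add (hΛ : 0 < Λ) (hΛ' : 0 < Λ') :
    deriv (fun t => bubble C₀ m P t (x + P')) Λ =
      C₀ * (m * Λ⁻¹ * Λ ^ m *
        dilationProfile m (1 + (Λ / Λ') ^ 2 * ‖Λ' • (P' - P) + Λ' • x‖ ^ 2)) := by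
  rw [(hasDerivAt_bubble hΛ).deriv, ← smul_add, norm_smul_of_nonneg hΛ'.le, sub_add_eq_add_sub,
    add_comm P']
  field_simp

lemma one_add_sq_rpow_neg_le_interaction_rpow {t : ℝ} (hm : 0 < m) (ht : 0 ≤ t) (hΛ : 0 < Λ)
    (hΛ' : 0 < Λ') (hΛκ : Λ ≤ κ * Λ') (hΛ'κ : Λ' ≤ κ * Λ) :
    (1 + ‖Λ' • (P' - P)‖ ^ 2) ^ (-t) ≤ (2 * κ) ^ t * interaction m P P' Λ Λ' ^ (t / m) := by
  have hκ : 0 < κ := pos_of_mul_pos_left (hΛ.trans_le hΛκ) hΛ'.le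
  have ratio_le : Λ / Λ' ≤ κ := (div_le_iff₀ hΛ').2 hΛκ
  have ratio_inv_le : Λ' / Λ ≤ κ := (div_le_iff₀ hΛ).2 hΛ'κ
  set Q := Λ / Λ' + Λ' / Λ + Λ * Λ' * ‖P - P'‖ ^ 2 with hQ
  have hQ0 : 0 < Q := by positivity
  have Q_le : Q ≤ 2 * κ * (1 + ‖Λ' • (P' - P)‖ ^ 2) := by
    have : Λ * Λ' * ‖P - P'‖ ^ 2 = Λ / Λ' * ‖Λ' • (P' - P)‖ ^ 2 := by
      rw [norm_smul_of_nonneg hΛ'.le, norm_sub_rev]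
      field_simp
    rw [hQ, this]
    nlinarith [sq_nonneg ‖Λ' • (P' - P)‖]
  calc (1 + ‖Λ' • (P' - P)‖ ^ 2) ^ (-t)
      = (2 * κ) ^ t * (2 * κ * (1 + ‖Λ' • (P' - P)‖ ^ 2)) ^ (-t) := by
        rw [Real.mul_rpow (x := 2 * κ) (by positivity) (by positivity),
          Real.rpow_neg (by positivity : 0 ≤ 2 * κ), mul_inv_cancel_left₀ (by positivity)]
    _ ≤ (2 * κ) ^ t * Q ^ (-t) :=
        mul_le_mul_of_nonneg_left (Real.rpow_le_rpow_of_nonpos hQ0 Q_le (by linarith))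
          (by positivity)
    _ = (2 * κ) ^ t * interaction m P P' Λ Λ' ^ (t / m) := by
        rw [interaction, ← hQ, ← Real.rpow_mul hQ0.le, neg_mul, mul_div_cancel₀ t hm.ne']

variable [FiniteDimensional ℝ E] [MeasurableSpace E] [BorelSpace E] (μ : Measure E)
  [μ.IsAddHaarMeasure]

lemma integral_bubble_rpow_mul_deriv_bubble (hC₀ : 0 < C₀) (hm : m ≠ 0)
    (hmq : m + q = finrank ℝ E) (hΛ : 0 < Λ) (hΛ' : 0 < Λ') :
    ∫ x, bubble C₀ m P' Λ' x ^ (q / m) * deriv (fun t => bubble C₀ m P t x) Λ ∂μ =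
      C₀ ^ ((m + q) / m) * (m * Λ⁻¹ * (Λ / Λ') ^ m) * ∫ y, (1 + ‖y‖ ^ 2) ^ (-q) *
        dilationProfile m (1 + (Λ / Λ') ^ 2 * ‖Λ' • (P' - P) + y‖ ^ 2) ∂μ := by
  set G : E → ℝ := fun y => (1 + ‖y‖ ^ 2) ^ (-q) *
    dilationProfile m (1 + (Λ / Λ') ^ 2 * ‖Λ' • (P' - P) + y‖ ^ 2)
  calc _ = ∫ x, bubble C₀ m P' Λ' (x + P') ^ (q / m) *
            deriv (fun t => bubble C₀ m P t (x + P')) Λ ∂μ :=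
        (integral_add_right_eq_self _ P').symm
    _ = ∫ x, C₀ ^ ((m + q) / m) * (m * Λ⁻¹ * (Λ ^ m * Λ' ^ q)) * G (Λ' • x) ∂μ := by
        congr with x
        rw [bubble_add_rpow_div hC₀ hm hΛ', deriv_bubble_add hΛ hΛ', add_div, div_self hm,
          Real.rpow_add hC₀, Real.rpow_one]
        ring
    _ = C₀ ^ ((m + q) / m) * (m * Λ⁻¹ * (Λ ^ m * (Λ' ^ q * (Λ' ^ (m + q))⁻¹))) * ∫ y, G y ∂μ := by
        rw [integral_const_mul, Measure.integral_comp_smul_of_nonneg μ G Λ' (hR := hΛ'.le),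
          smul_eq_mul, hmq, Real.rpow_natCast]
        ring
    _ = _ := by
        rw [Real.rpow_add hΛ', Real.div_rpow hΛ.le hΛ'.le]
        field_simp

end Bubble

section Expansion

lemma one_le_abs_log {x : ℝ} (hx : 0 < x) (hxe : x ≤ Real.exp (-1)) : 1 ≤ |Real.log x| := by
  have : Real.log x ≤ -1 := (Real.log_le_iff_le_exp hx).2 hxe
  rw [abs_of_neg (by linarith)]
  linarith

variable {E : Type*} [NormedAddCommGroup E] [InnerProductSpace ℝ E] [FiniteDimensional ℝ E]
  [MeasurableSpace E] [BorelSpace E] (μ : Measure E) [μ.IsAddHaarMeasure]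

lemma exists_abs_integral_mul_dilationProfile_sub_le {m q κ : ℝ} (hm : 0 < m)
    (hmq : m + q = finrank ℝ E) (hmq0 : m < q) (hmq1 : q < m + 2) (hκ : 1 ≤ κ) :
    ∃ K ≥ 0, ∀ (b : E) (lam : ℝ), κ⁻¹ ≤ lam → lam ≤ κ →
      |(∫ y, (1 + ‖y‖ ^ 2) ^ (-q) * dilationProfile m (1 + lam ^ 2 * ‖b + y‖ ^ 2) ∂μ) -
          (∫ y, (1 + ‖y‖ ^ 2) ^ (-q) ∂μ) *
            dilationProfile m (1 + lam ^ 2 * ‖b‖ ^ 2 + lam ^ 2)| ≤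
        K * (1 + ‖b‖ ^ 2) ^ (-(finrank ℝ E / 2 : ℝ)) := by
  have : Nontrivial E := nontrivial_of_finrank_pos (R := ℝ) <| by
    exact_mod_cast hmq ▸ (by linarith : 0 < m + q)
  have hκ0 : 0 < κ⁻¹ := by positivity
  have hκ1 : κ⁻¹ ≤ 1 := inv_le_one_of_one_le₀ hκ
  obtain ⟨A, hA⟩ := exists_hasSymmetricDecay_dilationProfile (E := E) hm.le hκ0 hκ1
  have hA0 : 0 ≤ A := (hA _ le_rfl).nonneg
  obtain ⟨K, hK0, hK⟩ := HasSymmetricDecay.exists_abs_integral_mul_sub_le μ (q := q) hm.le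
    (by linarith) (by linarith) (by linarith)
  set W := ∫ y : E, (1 + ‖y‖ ^ 2) ^ (-q) ∂μ
  have hW : 0 ≤ W := by positivity
  refine ⟨K * A + W * ((2 + m * κ ^ 2) * (κ⁻¹ ^ 2) ^ (-(finrank ℝ E / 2 : ℝ))), by positivity,
    fun b lam hlam hlamκ => ?_⟩
  set u := 1 + lam ^ 2 * ‖b‖ ^ 2
  have convolution := hK _ A (hA lam hlam) b
  rw [show m + q - finrank ℝ E / 2 = (finrank ℝ E / 2 : ℝ) by rw [hmq]; ring] at convolution
  have shift : |W * dilationProfile m u - W * dilationProfile m (u + lam ^ 2)| ≤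
      W * ((2 + m * κ ^ 2) * (κ⁻¹ ^ 2) ^ (-(finrank ℝ E / 2 : ℝ))) *
        (1 + ‖b‖ ^ 2) ^ (-(finrank ℝ E / 2 : ℝ)) := by
    rw [← mul_sub, abs_mul, abs_of_nonneg hW, abs_sub_comm, mul_assoc, mul_assoc]
    refine mul_le_mul_of_nonneg_left ((abs_dilationProfile_add_sub_le hm.le (by positivity)
      (sq_nonneg lam)).trans ?_) hW
    have lam_pos : 0 < lam := hκ0.trans_le hlam
    gcongr
    exact one_add_sq_mul_rpow_neg_le (by positivity) (by linarith) hκ0 hκ1 hlam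
  calc _ ≤ _ := abs_sub_le _ (W * dilationProfile m u) _
    _ ≤ _ := add_le_add convolution shift
    _ = _ := (add_mul _ _ _).symm

theorem stmt_18_general {n : ℕ} (hE : finrank ℝ E = n) {s C₀ κ : ℝ} (hs0 : 0 < s) (hs1 : s < 1)
    (hn : 2 * s < n) (hC₀ : 0 < C₀) (hκ : 1 ≤ κ) :
    ∃ C > 0, ∀ (P P' : E) (Λ Λ' : ℝ), 0 < Λ → 0 < Λ' → Λ ≤ κ * Λ' → Λ' ≤ κ * Λ →
      |(∫ x, bubble C₀ ((n - 2 * s) / 2) P' Λ' x ^ ((n + 2 * s) / (n - 2 * s)) *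
            deriv (fun t => bubble C₀ ((n - 2 * s) / 2) P t x) Λ ∂μ) -
          (C₀ ^ (2 * n / (n - 2 * s)) * ∫ y, (1 + ‖y‖ ^ 2) ^ (-((n + 2 * s) / 2)) ∂μ) *
            deriv (fun t => interaction ((n - 2 * s) / 2) P P' t Λ') Λ| ≤
        C * Λ⁻¹ * interaction ((n - 2 * s) / 2) P P' Λ Λ' ^ (n / (n - 2 * s)) := by
  subst hE
  set m : ℝ := (finrank ℝ E - 2 * s) / 2 with hm
  set q : ℝ := (finrank ℝ E + 2 * s) / 2 with hq
  have hm0 : 0 < m := by linarith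
  have hmq : m + q = finrank ℝ E := by rw [hm, hq]; ring
  rw [show (finrank ℝ E + 2 * s) / (finrank ℝ E - 2 * s) = q / m by rw [hm, hq]; field_simp,
    show 2 * finrank ℝ E / (finrank ℝ E - 2 * s) = (m + q) / m by rw [hmq, hm]; field_simp,
    show finrank ℝ E / (finrank ℝ E - 2 * s) = finrank ℝ E / 2 / m by rw [hm]; field_simp]
  obtain ⟨K, hK0, hK⟩ := exists_abs_integral_mul_dilationProfile_sub_le μ hm0 hmq
    (by linarith) (by linarith) hκ
  refine ⟨C₀ ^ ((m + q) / m) * (m * κ ^ m) * ((K + 1) * (2 * κ) ^ (finrank ℝ E / 2 : ℝ)),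
    by positivity, fun P P' Λ Λ' hΛ hΛ' hΛκ hΛ'κ => ?_⟩
  have ratio_le : Λ / Λ' ≤ κ := (div_le_iff₀ hΛ').2 hΛκ
  have le_ratio : κ⁻¹ ≤ Λ / Λ' := by
    rw [inv_le_comm₀ (by positivity) (by positivity), inv_div]
    exact (div_le_iff₀ hΛ).2 hΛ'κ
  rw [integral_bubble_rpow_mul_deriv_bubble μ hC₀ hm0.ne' hmq hΛ hΛ',
    (hasDerivAt_interaction hΛ hΛ').deriv, mul_mul_mul_comm (C₀ ^ _) _ (m * _ * _), ← mul_sub,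
    abs_mul, abs_of_nonneg (by positivity)]
  calc _ ≤ C₀ ^ ((m + q) / m) * (m * Λ⁻¹ * κ ^ m) * ((K + 1) *
          ((2 * κ) ^ (finrank ℝ E / 2 : ℝ) *
            interaction m P P' Λ Λ' ^ (finrank ℝ E / 2 / m : ℝ))) := by
        gcongr
        refine (hK _ _ le_ratio ratio_le).trans ?_
        gcongr
        · linarith
        · exact one_add_sq_rpow_neg_le_interaction_rpow hm0 (by positivity) hΛ hΛ' hΛκ hΛ'κ
    _ = _ := by ring

end Expansion

theorem stmt_18 (n : ℕ) (hn0 : 0 < n) (s C₀ C₁ C₂ : ℝ) (hs0 : 0 < s) (hs1 : s < 1)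
    (hn : 2 * s + 2 < (n : ℝ)) (hC₀ : 0 < C₀) (hC₁ : 0 < C₁) (hC₁₂ : C₁ < C₂) :
    -- `C` and `δ₀` depend only on `n, s, C₁, C₂` (and the fixed constant `C₀ = C₀(n,s)`)
    ∃ C > (0 : ℝ), ∃ δ₀ > (0 : ℝ),
      ∀ Pi Ph : EuclideanSpace ℝ (Fin n), ∀ Λi Λh : ℝ,
        Λi ∈ Set.Icc C₁ C₂ → Λh ∈ Set.Icc C₁ C₂ →
        (Λi / Λh + Λh / Λi + Λi * Λh * ‖Pi - Ph‖ ^ 2) ^ (-(((n : ℝ) - 2 * s) / 2)) ≤ δ₀ →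
        |(∫ x : EuclideanSpace ℝ (Fin n),
              (C₀ * (Λh / (1 + Λh ^ 2 * ‖x - Ph‖ ^ 2)) ^ (((n : ℝ) - 2 * s) / 2)) ^
                  (((n : ℝ) + 2 * s) / ((n : ℝ) - 2 * s)) *
                deriv (fun Λ : ℝ =>
                  C₀ * (Λ / (1 + Λ ^ 2 * ‖x - Pi‖ ^ 2)) ^ (((n : ℝ) - 2 * s) / 2)) Λi) -
            (C₀ ^ (2 * (n : ℝ) / ((n : ℝ) - 2 * s)) *
                ∫ y : EuclideanSpace ℝ (Fin n), (1 + ‖y‖ ^ 2) ^ (-(((n : ℝ) + 2 * s) / 2))) *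
              deriv (fun Λ : ℝ =>
                (Λ / Λh + Λh / Λ + Λ * Λh * ‖Pi - Ph‖ ^ 2) ^ (-(((n : ℝ) - 2 * s) / 2))) Λi| ≤
          C * Λi⁻¹ *
            ((Λi / Λh + Λh / Λi + Λi * Λh * ‖Pi - Ph‖ ^ 2) ^ (-(((n : ℝ) - 2 * s) / 2))) ^
              ((n : ℝ) / ((n : ℝ) - 2 * s)) *
            |Real.log ((Λi / Λh + Λh / Λi + Λi * Λh * ‖Pi - Ph‖ ^ 2) ^
              (-(((n : ℝ) - 2 * s) / 2)))| := by
  obtain ⟨C, hC, expansion⟩ := stmt_18_general (volume : Measure (EuclideanSpace ℝ (Fin n)))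
    finrank_euclideanSpace_fin hs0 hs1 (by linarith) hC₀ ((one_le_div hC₁).2 hC₁₂.le)
  refine ⟨C, hC, Real.exp (-1), Real.exp_pos _, fun Pi Ph Λi Λh hi hh hε => ?_⟩
  have ratio_le {a b : ℝ} (ha : a ∈ Icc C₁ C₂) (hb : b ∈ Icc C₁ C₂) : a ≤ C₂ / C₁ * b := by
    have : 0 < C₂ := hC₁.trans hC₁₂
    calc a ≤ C₂ / C₁ * C₁ := (div_mul_cancel₀ C₂ hC₁.ne').symm ▸ ha.2
      _ ≤ C₂ / C₁ * b := by gcongr; exact hb.1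
  have hi0 : 0 < Λi := hC₁.trans_le hi.1
  have hh0 : 0 < Λh := hC₁.trans_le hh.1
  have hε0 : 0 < interaction (((n : ℝ) - 2 * s) / 2) Pi Ph Λi Λh := interaction_pos hi0 hh0
  exact (expansion Pi Ph Λi Λh hi0 hh0 (ratio_le hi hh) (ratio_le hh hi)).trans <|
    le_mul_of_one_le_right (by positivity) (one_le_abs_log hε0 hε)
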